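/- Let S and A be finite nonempty types, P : S → A → PMF S a transition kernel, γ a real number with 0 ≤ γ < 1, and r : S → A → ℝ a reward function. For a deterministic policy μ : S → A (identified with the stochastic policy s ↦ PMF.pure (μ s)) let Q^μ denote the unique solution of Q^μ(s,a) = r(s,a) + γ · ∑_{s'} (P s a) s' · Q^μ(s', μ(s')). Let (μ_k) be any sequence of deterministic policies starting from an arbitrary μ₀ and satisfying the greedy improvement rule μ_{k+1}(s) ∈ argmax_{a ∈ A} Q^{μ_k}(s,a) for all s and k. Then Q^{μ_{k+1}}(s,a) ≥ Q^{μ_k}(s,a) for all k and all (s,a), and there exists N such that for all k ≥ N, Q^{μ_k} = Q^{μ_N} and Q^{μ_N}(s,a) ≥ Q^{π}(s,a) for every policy π : S → PMF A and every (s,a). -/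

import Mathlib

open scoped BigOperators

theorem PMF.sum_toReal_eq_one {α : Type*} [Fintype α] (p : PMF α) :
    ∑ a, (p a).toReal = 1 := by
  rw [← ENNReal.toReal_sum fun a _ => p.apply_ne_top a, ← tsum_fintype (L := .unconditional _),
    p.tsum_coe, ENNReal.toReal_one]

theorem PMF.sum_toReal_mul_le {α : Type*} [Fintype α] (p : PMF α) {f : α → ℝ} {c : ℝ}
    (hf : ∀ a, f a ≤ c) : ∑ a, (p a).toReal * f a ≤ c :=
  calc ∑ a, (p a).toReal * f a ≤ ∑ a, (p a).toReal * c :=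
        Finset.sum_le_sum fun a _ => mul_le_mul_of_nonneg_left (hf a) ENNReal.toReal_nonneg
    _ = c := by rw [← Finset.sum_mul, p.sum_toReal_eq_one, one_mul]

/-- Comparison principle for Bellman equations: if every uniform bound on `Q' - Q` also bounds the
difference `v' - v` of the associated state values, then `Q' ≤ Q`. -/
theorem bellman_comparison {S A : Type*} [Fintype S] [Finite A]
    (P : S → A → PMF S) {γ : ℝ} (hγ0 : 0 ≤ γ) (hγ1 : γ < 1) (r : S → A → ℝ)
    {Q Q' : S × A → ℝ} {v v' : S → ℝ}
    (hQ : ∀ s a, Q (s, a) = r s a + γ * ∑ s', ((P s a) s').toReal * v s')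
    (hQ' : ∀ s a, Q' (s, a) = r s a + γ * ∑ s', ((P s a) s').toReal * v' s')
    (hv : ∀ M, (∀ x, Q' x - Q x ≤ M) → ∀ s, v' s - v s ≤ M) : Q' ≤ Q := by
  intro x
  have : Nonempty (S × A) := ⟨x⟩
  obtain ⟨⟨s, a⟩, hmax⟩ := Finite.exists_max fun y => Q' y - Q y
  have hsum := (P s a).sum_toReal_mul_le (hv _ hmax)
  have hcontr : Q' (s, a) - Q (s, a) ≤ γ * (Q' (s, a) - Q (s, a)) :=
    calc Q' (s, a) - Q (s, a) = γ * ∑ s', ((P s a) s').toReal * (v' s' - v s') := by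
          rw [hQ, hQ']
          simp only [mul_sub, Finset.sum_sub_distrib]
          ring
      _ ≤ γ * (Q' (s, a) - Q (s, a)) := mul_le_mul_of_nonneg_left hsum hγ0
  have hx := hmax x
  nlinarith

/-- Finite convergence of greedy policy iteration: given deterministic policies
`μ k` with Q-functions `Q k`, where each `μ (k+1)` is greedy with respect to
`Q k`, the Q-functions improve monotonically, and after finitely many steps the
Q-function stabilizes at a value dominating the Q-function of every policy. -/
theorem greedy_policy_iteration_converges {S A : Type*}
    [Fintype S] [Nonempty S] [Fintype A] [Nonempty A]
    (P : S → A → PMF S) (γ : ℝ) (hγ0 : 0 ≤ γ) (hγ1 : γ < 1)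
    (r : S → A → ℝ)
    (μ : ℕ → S → A) (Q : ℕ → S × A → ℝ)
    (hQ : ∀ (k : ℕ) (s : S) (a : A),
      Q k (s, a) = r s a + γ * ∑ s' : S, ((P s a) s').toReal *
        Q k (s', μ k s'))
    (hgreedy : ∀ (k : ℕ) (s : S) (a : A),
      Q k (s, μ (k + 1) s) ≥ Q k (s, a)) :
    (∀ (k : ℕ) (s : S) (a : A), Q (k + 1) (s, a) ≥ Q k (s, a)) ∧
    ∃ N : ℕ,
      (∀ k : ℕ, N ≤ k → Q k = Q N) ∧
      ∀ (π : S → PMF A) (Qπ : S × A → ℝ),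
        (∀ (s : S) (a : A),
          Qπ (s, a) = r s a + γ * ∑ s' : S, ((P s a) s').toReal *
            ∑ a' : A, ((π s') a').toReal * Qπ (s', a')) →
        ∀ (s : S) (a : A), Q N (s, a) ≥ Qπ (s, a) := by
  have hmono : Monotone Q := monotone_nat_of_le_succ fun k =>
    bellman_comparison P hγ0 hγ1 r (hQ (k + 1)) (hQ k) fun M hM s => by
      linarith [hM (s, μ (k + 1) s), hgreedy k s (μ k s)]
  refine ⟨fun k s a => hmono k.le_succ (s, a), ?_⟩
  obtain ⟨ν, hν⟩ := Finite.exists_infinite_fiber μ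
  rw [Set.infinite_coe_iff] at hν
  obtain ⟨N, hN⟩ := hν.nonempty
  have hstable : ∀ k, N ≤ k → Q k = Q N := by
    intro k hk
    obtain ⟨j, hj, hkj⟩ := hν.exists_gt k
    have hμ : μ j = μ N := Eq.trans hj (Eq.symm hN)
    have hjN : Q j ≤ Q N :=
      bellman_comparison P hγ0 hγ1 r (hQ N) (hQ j) fun M hM s => by
        rw [hμ]
        exact hM _
    exact le_antisymm ((hmono hkj.le).trans hjN) (hmono hk)
  refine ⟨N, hstable, fun π Qπ hπ s a => ?_⟩
  have hfix := hQ (N + 1)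
  rw [hstable (N + 1) N.le_succ] at hfix
  refine bellman_comparison P hγ0 hγ1 r hfix hπ (fun M hM s' => ?_) (s, a)
  rw [sub_le_iff_le_add]
  exact (π s').sum_toReal_mul_le fun a' => by
    linarith [hM (s', a'), hgreedy N s' a']
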